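/- There exists a universal constant C > 0 such that for every c > 0 and R > 0 there exists a radial function q : ℝ⁶ → ℝ of class C³ whose third derivatives are locally Lipschitz, together with a radius R̃ > R and a finite set S of spheres centered at the origin off which q is smooth, satisfying: (P1) q(x) = |x|²/2 for |x| ≤ R; (P2) q(x) is constant for |x| ≥ R̃; (P3) |∇q(x)| ≤ C|x| and |Δq(x)| ≤ C for all x (with C independent of c and R); (P4) for all x ∈ ℝ⁶ and all v ∈ ℝ⁶, Σ_{i,j=1}^{6} ∂_{x_i x_j}q(x)·v_i v_j ≥ −c·|v|²; (P5) Δ²q(x) ≤ c·|x|^{−2} for every x ∉ S. -/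

import Mathlib

noncomputable section

/-- Six-dimensional Euclidean space. -/
abbrev E6 := EuclideanSpace ℝ (Fin 6)

/-- The (pointwise) Laplacian of a function on `ℝ⁶`, as the sum of second
directional derivatives along the coordinate directions. -/
def lap6 (f : E6 → ℝ) (x : E6) : ℝ :=
  ∑ i : Fin 6,
    fderiv ℝ (fun y => fderiv ℝ f y (EuclideanSpace.single i 1)) x
      (EuclideanSpace.single i 1)

/-- Bounds for the first three derivatives of the smooth transition. -/
theorem aux_bound : ∃ M > (0 : ℝ), (∀ s, |deriv Real.smoothTransition s| ≤ M) ∧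
    (∀ s, |deriv (deriv Real.smoothTransition) s| ≤ M) ∧
    (∀ s, |deriv (deriv (deriv Real.smoothTransition)) s| ≤ M) := by
  have hc : ContDiff ℝ (⊤ : ℕ∞) Real.smoothTransition := Real.smoothTransition.contDiff
  have hc1 : ContDiff ℝ (⊤ : ℕ∞) (deriv Real.smoothTransition) :=
    (contDiff_infty_iff_deriv.1 hc).2
  have hc2 := (contDiff_infty_iff_deriv.1 hc1).2
  have hc3 := (contDiff_infty_iff_deriv.1 hc2).2
  have s1 : HasCompactSupport (deriv Real.smoothTransition) := by
    apply HasCompactSupport.intro (isCompact_Icc (a := (0 : ℝ)) (b := 1))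
    intro x hx
    rw [Set.mem_Icc, not_and_or, not_le, not_le] at hx
    rcases hx with hx | hx
    · have : Real.smoothTransition =ᶠ[nhds x] fun _ => (0 : ℝ) := by
        filter_upwards [Iio_mem_nhds hx] with y hy
        exact Real.smoothTransition.zero_of_nonpos (le_of_lt hy)
      rw [this.deriv_eq]; simp
    · have : Real.smoothTransition =ᶠ[nhds x] fun _ => (1 : ℝ) := by
        filter_upwards [Ioi_mem_nhds hx] with y hy
        exact Real.smoothTransition.one_of_one_le (le_of_lt hy)
      rw [this.deriv_eq]; simp
  have s2 := s1.deriv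
  have s3 := s2.deriv
  obtain ⟨M1, h1⟩ := s1.exists_bound_of_continuous hc1.continuous
  obtain ⟨M2, h2⟩ := s2.exists_bound_of_continuous hc2.continuous
  obtain ⟨M3, h3⟩ := s3.exists_bound_of_continuous hc3.continuous
  refine ⟨max (max M1 M2) M3 + 1, ?_, ?_, ?_, ?_⟩
  · have := (norm_nonneg _).trans (h1 0)
    have := (le_max_left M1 M2).trans (le_max_left _ M3)
    linarith
  · intro s
    have := h1 s
    rw [Real.norm_eq_abs] at this
    have := (le_max_left M1 M2).trans (le_max_left _ M3)
    linarith
  · intro s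
    have := h2 s
    rw [Real.norm_eq_abs] at this
    have := (le_max_right M1 M2).trans (le_max_left _ M3)
    linarith
  · intro s
    have := h3 s
    rw [Real.norm_eq_abs] at this
    have := le_max_right (max M1 M2) M3
    linarith

/-- Logarithmically slow cutoff. -/
theorem aux_cutoff (ε A : ℝ) (hε : 0 < ε) (hA : 0 < A) :
    ∃ (h : ℝ → ℝ) (B : ℝ), A < B ∧ ContDiff ℝ (⊤ : ℕ∞) h ∧
      (∀ t, t ≤ A → h t = 1) ∧ (∀ t, B ≤ t → h t = 0) ∧ (∀ t, 0 ≤ h t ∧ h t ≤ 1) ∧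
      deriv h 0 = 0 ∧
      (∀ t, 0 < t → |t * deriv h t| ≤ ε ∧ |t ^ 2 * deriv (deriv h) t| ≤ ε ∧
        |t ^ 3 * deriv (deriv (deriv h)) t| ≤ ε) := by
  obtain ⟨M, hM, b1, b2, b3⟩ := aux_bound
  obtain ⟨δ, hδ, hδ1, hδM⟩ : ∃ δ : ℝ, 0 < δ ∧ δ ≤ 1 ∧ 6 * δ * M ≤ ε := by
    refine ⟨min 1 (ε / (6 * M)), by positivity, min_le_left _ _, ?_⟩
    have := min_le_right 1 (ε / (6 * M))
    rw [le_div_iff₀ (by positivity)] at this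
    linarith
  set σ := Real.smoothTransition with hσ
  have hc : ContDiff ℝ (⊤ : ℕ∞) σ := Real.smoothTransition.contDiff
  have hc1 : ContDiff ℝ (⊤ : ℕ∞) (deriv σ) := (contDiff_infty_iff_deriv.1 hc).2
  have hc2 := (contDiff_infty_iff_deriv.1 hc1).2
  have d0 : ∀ s, HasDerivAt σ (deriv σ s) s := fun s =>
    ((contDiff_infty_iff_deriv.1 hc).1 s).hasDerivAt
  have d1 : ∀ s, HasDerivAt (deriv σ) (deriv (deriv σ) s) s := fun s =>
    ((contDiff_infty_iff_deriv.1 hc1).1 s).hasDerivAt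
  have d2 : ∀ s, HasDerivAt (deriv (deriv σ)) (deriv (deriv (deriv σ)) s) s := fun s =>
    ((contDiff_infty_iff_deriv.1 hc2).1 s).hasDerivAt
  let u : ℝ → ℝ := fun t => δ * (Real.log t - Real.log A)
  have du : ∀ t, 0 < t → HasDerivAt u (δ * t⁻¹) t := fun t ht =>
    ((Real.hasDerivAt_log ht.ne').sub_const _).const_mul δ
  let h : ℝ → ℝ := fun t => if t ≤ 0 then 1 else 1 - σ (u t)
  have hpos : ∀ t, 0 < t → h t = 1 - σ (u t) := fun t ht => if_neg (not_le.2 ht)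
  have hone : ∀ t, t ≤ A → h t = 1 := by
    intro t ht
    by_cases h0 : t ≤ 0
    · exact if_pos h0
    · push Not at h0
      rw [hpos t h0]
      have : u t ≤ 0 := by
        have := Real.log_le_log h0 ht
        exact mul_nonpos_of_nonneg_of_nonpos hδ.le (by linarith)
      rw [hσ, Real.smoothTransition.zero_of_nonpos this, sub_zero]
  have e0 : ∀ t, 0 < t → h =ᶠ[nhds t] fun t => 1 - σ (u t) := by
    intro t ht
    filter_upwards [Ioi_mem_nhds ht] with y hy using hpos y hy
  have e1 : ∀ t, 0 < t → deriv h t = -(δ * deriv σ (u t)) * t⁻¹ := by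
    intro t ht
    rw [(e0 t ht).deriv_eq]
    have := (((d0 (u t)).comp t (du t ht)).const_sub 1).deriv
    simp only [Function.comp_def] at this
    rw [this]; ring
  have e2 : ∀ t, 0 < t → deriv (deriv h) t =
      (δ * deriv σ (u t) - δ ^ 2 * deriv (deriv σ) (u t)) * (t⁻¹) ^ 2 := by
    intro t ht
    have ee : deriv h =ᶠ[nhds t] fun t => -(δ * deriv σ (u t)) * t⁻¹ := by
      filter_upwards [Ioi_mem_nhds ht] with y hy using e1 y hy
    rw [ee.deriv_eq]
    have := (((((d1 (u t)).comp t (du t ht)).const_mul δ).neg).mul (hasDerivAt_inv ht.ne'))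
    have := this.deriv
    simp only [Function.comp_def] at this
    refine Eq.trans ?_ (this.trans ?_)
    · rfl
    · field_simp; simp; ring
  have e3 : ∀ t, 0 < t → deriv (deriv (deriv h)) t =
      (-2 * δ * deriv σ (u t) + 3 * δ ^ 2 * deriv (deriv σ) (u t)
        - δ ^ 3 * deriv (deriv (deriv σ)) (u t)) * (t⁻¹) ^ 3 := by
    intro t ht
    have ee : deriv (deriv h) =ᶠ[nhds t] fun t =>
        (δ * deriv σ (u t) - δ ^ 2 * deriv (deriv σ) (u t)) * (t⁻¹) ^ 2 := by
      filter_upwards [Ioi_mem_nhds ht] with y hy using e2 y hy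
    rw [ee.deriv_eq]
    have := ((((d1 (u t)).comp t (du t ht)).const_mul δ).sub
      (((d2 (u t)).comp t (du t ht)).const_mul (δ ^ 2))).mul ((hasDerivAt_inv ht.ne').pow 2)
    have := this.deriv
    simp only [Function.comp_def] at this
    refine Eq.trans ?_ (this.trans ?_)
    · rfl
    · simp; field_simp; ring
  refine ⟨h, A * Real.exp (1 / δ), ?_, ?_, hone, ?_, ?_, ?_, ?_⟩
  · have : 1 < Real.exp (1 / δ) := Real.one_lt_exp_iff.2 (by positivity)
    nlinarith
  · rw [contDiff_iff_contDiffAt]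
    intro t
    rcases lt_or_ge t A with ht | ht
    · have : h =ᶠ[nhds t] fun _ => (1 : ℝ) := by
        filter_upwards [Iio_mem_nhds ht] with y hy using hone y (le_of_lt hy)
      exact contDiffAt_const.congr_of_eventuallyEq this
    · have ht0 : 0 < t := hA.trans_le ht
      refine ContDiffAt.congr_of_eventuallyEq ?_ (e0 t ht0)
      refine contDiffAt_const.sub (hc.contDiffAt.comp t ?_)
      exact contDiffAt_const.mul ((Real.contDiffAt_log.2 ht0.ne').sub contDiffAt_const)
  · intro t ht
    have ht0 : 0 < t := lt_of_lt_of_le (by positivity) ht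
    rw [hpos t ht0, sub_eq_zero]
    refine (Real.smoothTransition.one_of_one_le ?_).symm
    have := Real.log_le_log (by positivity) ht
    rw [Real.log_mul hA.ne' (Real.exp_pos _).ne', Real.log_exp] at this
    have h2 : 1 / δ ≤ Real.log t - Real.log A := by linarith
    rw [div_le_iff₀ hδ] at h2
    show 1 ≤ δ * (Real.log t - Real.log A)
    linarith
  · intro t
    by_cases h0 : t ≤ 0
    · rw [hone t (h0.trans hA.le)]; norm_num
    · push Not at h0
      rw [hpos t h0]
      have := Real.smoothTransition.nonneg (u t)
      have := Real.smoothTransition.le_one (u t)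
      constructor <;> linarith
  · have : h =ᶠ[nhds 0] fun _ => (1 : ℝ) := by
      filter_upwards [Iio_mem_nhds hA] with y hy using hone y (le_of_lt hy)
    rw [this.deriv_eq]; simp
  · intro t ht
    rw [e1 t ht, e2 t ht, e3 t ht]
    have c1 := b1 (u t)
    have c2 := b2 (u t)
    have c3 := b3 (u t)
    generalize deriv σ (u t) = y1 at *
    generalize deriv (deriv σ) (u t) = y2 at *
    generalize deriv (deriv (deriv σ)) (u t) = y3 at *
    have k1 : |δ * y1| ≤ δ * M := by
      rw [abs_mul, abs_of_pos hδ]; gcongr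
    have k2 : |δ ^ 2 * y2| ≤ δ * M := by
      rw [abs_mul, abs_of_pos (by positivity : 0 < δ ^ 2)]
      have : δ ^ 2 ≤ δ := by nlinarith
      gcongr
    have k3 : |δ ^ 3 * y3| ≤ δ * M := by
      rw [abs_mul, abs_of_pos (by positivity : 0 < δ ^ 3)]
      have : δ ^ 3 ≤ δ := by
        have : δ ^ 2 ≤ 1 := by nlinarith
        nlinarith
      gcongr
    have q1 : t * (-(δ * y1) * t⁻¹) = -(δ * y1) := by field_simp
    have q2 : t ^ 2 * ((δ * y1 - δ ^ 2 * y2) * t⁻¹ ^ 2) = δ * y1 - δ ^ 2 * y2 := by field_simp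
    have q3 : t ^ 3 * ((-2 * δ * y1 + 3 * δ ^ 2 * y2 - δ ^ 3 * y3) * t⁻¹ ^ 3)
      = -2 * (δ * y1) + 3 * (δ ^ 2 * y2) - δ ^ 3 * y3 := by field_simp
    rw [q1, q2, q3]
    have : 0 < δ * M := by positivity
    rw [abs_le] at k1 k2 k3
    refine ⟨abs_le.2 ⟨?_, ?_⟩, abs_le.2 ⟨?_, ?_⟩, abs_le.2 ⟨?_, ?_⟩⟩ <;> linarith

theorem aux_fderiv (G : ℝ → ℝ) (x : E6) (G' : ℝ) (hG : HasDerivAt G G' (‖x‖ ^ 2)) :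
    HasFDerivAt (fun y : E6 => G (‖y‖ ^ 2)) ((2 * G') • innerSL ℝ x) x := by
  have h1 : HasFDerivAt (fun y : E6 => ‖y‖ ^ 2) (2 • innerSL ℝ x) x := by
    simpa using (hasFDerivAt_id x).norm_sq
  have := hG.comp_hasFDerivAt x h1
  refine this.congr_fderiv ?_
  ext v
  simp
  ring

theorem aux_fderiv_single (G : ℝ → ℝ) (x : E6) (G' : ℝ) (hG : HasDerivAt G G' (‖x‖ ^ 2))
    (i : Fin 6) :
    fderiv ℝ (fun y : E6 => G (‖y‖ ^ 2)) x (EuclideanSpace.single i 1) = 2 * G' * x i := by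
  rw [(aux_fderiv G x G' hG).fderiv]
  simp [EuclideanSpace.inner_single_right]

theorem aux_hess (G H : ℝ → ℝ) (hG : ∀ t, HasDerivAt G (H t / 2) t) (x : E6) (H' : ℝ)
    (hH : HasDerivAt H H' (‖x‖ ^ 2)) (i j : Fin 6) :
    fderiv ℝ (fun y => fderiv ℝ (fun y : E6 => G (‖y‖ ^ 2)) y (EuclideanSpace.single j 1)) x
      (EuclideanSpace.single i 1) = 2 * H' * x i * x j + H (‖x‖ ^ 2) * (if i = j then 1 else 0) := by
  have h1 : (fun y => fderiv ℝ (fun y : E6 => G (‖y‖ ^ 2)) y (EuclideanSpace.single j 1))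
      = fun y => H (‖y‖ ^ 2) * y j := by
    funext y
    rw [aux_fderiv_single G y _ (hG _) j]
    ring
  rw [h1]
  have h2 : HasFDerivAt (fun y : E6 => y j) (EuclideanSpace.proj j : E6 →L[ℝ] ℝ) x :=
    (EuclideanSpace.proj j : E6 →L[ℝ] ℝ).hasFDerivAt
  have := ((aux_fderiv H x H' hH).mul h2).fderiv
  refine (congrArg (fun L : E6 →L[ℝ] ℝ => L (EuclideanSpace.single i 1)) this).trans ?_
  simp [EuclideanSpace.inner_single_right, eq_comm]
  ring

theorem aux_sq (x : E6) : ∑ i, x i * x i = ‖x‖ ^ 2 := by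
  rw [EuclideanSpace.norm_sq_eq]
  simp [sq]

theorem aux_lap (G H : ℝ → ℝ) (hG : ∀ t, HasDerivAt G (H t / 2) t) (x : E6) (H' : ℝ)
    (hH : HasDerivAt H H' (‖x‖ ^ 2)) :
    lap6 (fun y : E6 => G (‖y‖ ^ 2)) x = 2 * H' * ‖x‖ ^ 2 + 6 * H (‖x‖ ^ 2) := by
  unfold lap6
  simp only [aux_hess G H hG x H' hH]
  rw [Finset.sum_add_distrib, ← aux_sq, Finset.mul_sum]
  simp [mul_assoc]

/-- Construction of the virial weight on `ℝ⁶`: there is a universal constant `C > 0`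
such that for all `c, R > 0` there is a radial function `q` of class `C³` with locally
Lipschitz third derivatives, smooth off a finite set `S` of spheres centered at the
origin, with `q = |x|²/2` for `|x| ≤ R`, `q` constant for `|x| ≥ R̃`, `|∇q| ≤ C|x|`,
`|Δq| ≤ C`, `∇²q ≥ −c`, and `Δ²q ≤ c·|x|⁻²` off `S`. -/
theorem stmt7 :
    ∃ C > (0 : ℝ), ∀ c > (0 : ℝ), ∀ R > (0 : ℝ),
      ∃ (q : E6 → ℝ) (R' : ℝ) (S : Finset ℝ),
        R < R' ∧
        -- q is radial
        (∃ q₀ : ℝ → ℝ, ∀ x : E6, q x = q₀ ‖x‖) ∧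
        -- C³ regularity with locally Lipschitz third derivatives
        ContDiff ℝ 3 q ∧
        (∀ K : Set E6, IsCompact K →
          ∃ L : NNReal, LipschitzOnWith L (iteratedFDeriv ℝ 3 q) K) ∧
        -- smooth off the spheres of radii in S
        (∀ x : E6, ‖x‖ ∉ S → ContDiffAt ℝ (⊤ : ℕ∞) q x) ∧
        -- (P1)
        (∀ x : E6, ‖x‖ ≤ R → q x = ‖x‖ ^ 2 / 2) ∧
        -- (P2)
        (∃ k₀ : ℝ, ∀ x : E6, R' ≤ ‖x‖ → q x = k₀) ∧
        -- (P3)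
        (∀ x : E6, ‖gradient q x‖ ≤ C * ‖x‖ ∧ |lap6 q x| ≤ C) ∧
        -- (P4)
        (∀ (x v : E6),
          -(c * ‖v‖ ^ 2) ≤ ∑ i : Fin 6, ∑ j : Fin 6,
            fderiv ℝ (fun y => fderiv ℝ q y (EuclideanSpace.single j 1)) x
                (EuclideanSpace.single i 1) * v i * v j) ∧
        -- (P5)
        (∀ x : E6, ‖x‖ ∉ S → lap6 (lap6 q) x ≤ c / ‖x‖ ^ 2) := by
  refine ⟨8, by norm_num, ?_⟩
  intro c hc R hR
  obtain ⟨ε, hε, hε1, hεc⟩ : ∃ ε : ℝ, 0 < ε ∧ ε ≤ 1 ∧ 168 * ε ≤ c :=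
    ⟨min 1 (c / 168), by positivity, min_le_left _ _, by
      have := min_le_right 1 (c / 168)
      linarith⟩
  obtain ⟨h, B, hAB, hsm, hone, hzero, h01, hd0, hb⟩ := aux_cutoff ε (R ^ 2) hε (by positivity)
  have hsm1 := (contDiff_infty_iff_deriv.1 hsm).2
  have hsm2 := (contDiff_infty_iff_deriv.1 hsm1).2
  have D0 : ∀ t, HasDerivAt h (deriv h t) t := fun t =>
    ((contDiff_infty_iff_deriv.1 hsm).1 t).hasDerivAt
  have D1 : ∀ t, HasDerivAt (deriv h) (deriv (deriv h) t) t := fun t =>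
    ((contDiff_infty_iff_deriv.1 hsm1).1 t).hasDerivAt
  have D2 : ∀ t, HasDerivAt (deriv (deriv h)) (deriv (deriv (deriv h)) t) t := fun t =>
    ((contDiff_infty_iff_deriv.1 hsm2).1 t).hasDerivAt
  let F : ℝ → ℝ := fun t => ∫ s in (0 : ℝ)..t, h s / 2
  have hcont : Continuous fun s => h s / 2 := hsm.continuous.div_const 2
  have DF : ∀ t, HasDerivAt F (h t / 2) t := fun t =>
    intervalIntegral.integral_hasDerivAt_right (hcont.intervalIntegrable _ _)
      hcont.stronglyMeasurable.stronglyMeasurableAtFilter hcont.continuousAt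
  have hF : ContDiff ℝ (⊤ : ℕ∞) F := by
    rw [contDiff_infty_iff_deriv]
    refine ⟨fun t => (DF t).differentiableAt, ?_⟩
    have : deriv F = fun t => h t / 2 := funext fun t => (DF t).deriv
    rw [this]
    exact hsm.div_const 2
  have hq : ContDiff ℝ (⊤ : ℕ∞) (fun x : E6 => F (‖x‖ ^ 2)) := hF.comp (contDiff_norm_sq ℝ)
  have hBpos : 0 < B := lt_trans (by positivity) hAB
  -- the weighted first derivative is small, also at the origin
  have hb1 : ∀ t, 0 ≤ t → |t * deriv h t| ≤ ε := by
    intro t ht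
    rcases ht.eq_or_lt with rfl | ht
    · simpa using hε.le
    · exact (hb t ht).1
  have hlap : ∀ x : E6, lap6 (fun x : E6 => F (‖x‖ ^ 2)) x
      = 2 * deriv h (‖x‖ ^ 2) * ‖x‖ ^ 2 + 6 * h (‖x‖ ^ 2) := fun x =>
    aux_lap F h DF x _ (D0 _)
  refine ⟨fun x => F (‖x‖ ^ 2), Real.sqrt B, ∅, Real.lt_sqrt_of_sq_lt hAB,
    ⟨fun r => F (r ^ 2), fun x => rfl⟩, contDiff_infty.1 hq 3, ?_,
    fun x _ => hq.contDiffAt, ?_, ⟨F B, ?_⟩, ?_, ?_, ?_⟩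
  · intro K hK
    have h1 : ContDiff ℝ 1 (iteratedFDeriv ℝ 3 (fun x : E6 => F (‖x‖ ^ 2))) :=
      (contDiff_infty.1 hq 4).iteratedFDeriv_right (by norm_num)
    exact (h1.locallyLipschitz.locallyLipschitzOn).exists_lipschitzOnWith_of_compact hK
  · intro x hx
    have hx2 : ‖x‖ ^ 2 ≤ R ^ 2 := by gcongr
    have : F (‖x‖ ^ 2) = ∫ s in (0 : ℝ)..(‖x‖ ^ 2), (1 / 2 : ℝ) := by
      apply intervalIntegral.integral_congr
      intro s hs
      rw [Set.uIcc_of_le (by positivity)] at hs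
      simp only [hone s (hs.2.trans hx2)]
    show F (‖x‖ ^ 2) = _
    rw [this]
    simp
    ring
  · intro x hx
    have hx2 : B ≤ ‖x‖ ^ 2 := by
      rw [← Real.sq_sqrt hBpos.le]; gcongr
    have h1 : F (‖x‖ ^ 2) - F B = ∫ s in B..(‖x‖ ^ 2), h s / 2 :=
      intervalIntegral.integral_interval_sub_left (hcont.intervalIntegrable _ _)
        (hcont.intervalIntegrable _ _)
    have h2 : ∫ s in B..(‖x‖ ^ 2), h s / 2 = ∫ s in B..(‖x‖ ^ 2), (0 : ℝ) := by
      apply intervalIntegral.integral_congr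
      intro s hs
      rw [Set.uIcc_of_le hx2] at hs
      simp only [hzero s hs.1, zero_div]
    rw [h2, intervalIntegral.integral_zero] at h1
    show F (‖x‖ ^ 2) = F B
    linarith
  · intro x
    have h0 := h01 (‖x‖ ^ 2)
    constructor
    · have : gradient (fun x : E6 => F (‖x‖ ^ 2)) x = h (‖x‖ ^ 2) • x := by
        apply HasGradientAt.gradient
        rw [hasGradientAt_iff_hasFDerivAt]
        refine (aux_fderiv F x _ (DF _)).congr_fderiv ?_
        ext v
        simp [inner_smul_left]
        ring_nf
        simp
      rw [this, norm_smul, Real.norm_eq_abs, abs_of_nonneg h0.1]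
      nlinarith [norm_nonneg x]
    · rw [hlap]
      have := abs_le.1 (hb1 (‖x‖ ^ 2) (by positivity))
      exact abs_le.2 ⟨by nlinarith, by nlinarith⟩
  · intro x v
    simp only [aux_hess F h DF x _ (D0 _)]
    have h0 := (h01 (‖x‖ ^ 2)).1
    have hs : ∑ i : Fin 6, ∑ j : Fin 6, (2 * deriv h (‖x‖ ^ 2) * x i * x j
        + h (‖x‖ ^ 2) * (if i = j then 1 else 0)) * v i * v j
        = 2 * deriv h (‖x‖ ^ 2) * (∑ i, x i * v i) ^ 2 + h (‖x‖ ^ 2) * ‖v‖ ^ 2 := by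
      rw [← aux_sq v]
      simp only [Fin.sum_univ_six]
      simp
      ring
    rw [hs]
    have hin : ∑ i, x i * v i = inner ℝ x v := by
      simp [PiLp.inner_apply, mul_comm]
    rw [hin]
    have hcs : (inner ℝ x v : ℝ) ^ 2 ≤ ‖x‖ ^ 2 * ‖v‖ ^ 2 := by
      rw [← mul_pow, ← sq_abs]
      gcongr
      exact abs_real_inner_le_norm x v
    have hb' := abs_le.1 (hb1 (‖x‖ ^ 2) (by positivity))
    generalize deriv h (‖x‖ ^ 2) = d at *
    have hv : 0 ≤ ‖v‖ ^ 2 := by positivity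
    have hh : 0 ≤ h (‖x‖ ^ 2) * ‖v‖ ^ 2 := by positivity
    have hkey : -(ε * ‖v‖ ^ 2) ≤ d * (inner ℝ x v : ℝ) ^ 2 := by
      rcases le_total 0 d with hd | hd
      · have : 0 ≤ d * (inner ℝ x v : ℝ) ^ 2 := by positivity
        have : 0 ≤ ε * ‖v‖ ^ 2 := by positivity
        linarith
      · have e1 := mul_le_mul_of_nonpos_left hcs hd
        have e2 := mul_le_mul_of_nonneg_right hb'.1 hv
        linarith
    have : 2 * ε * ‖v‖ ^ 2 ≤ c * ‖v‖ ^ 2 := by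
      gcongr; linarith
    linarith
  · intro x _
    let g : ℝ → ℝ := fun t => 2 * deriv h t * t + 6 * h t
    have hg : lap6 (fun x : E6 => F (‖x‖ ^ 2)) = fun x => g (‖x‖ ^ 2) := funext hlap
    have Dg : ∀ t, HasDerivAt g ((2 * (2 * deriv (deriv h) t * t + 8 * deriv h t)) / 2) t := by
      intro t
      refine ((((D1 t).const_mul 2).mul (hasDerivAt_id t)).add
        ((D0 t).const_mul 6)).congr_deriv ?_
      simp only [id]
      ring
    have Dg2 : HasDerivAt (fun t => 2 * (2 * deriv (deriv h) t * t + 8 * deriv h t))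
        (2 * (2 * deriv (deriv (deriv h)) (‖x‖ ^ 2) * ‖x‖ ^ 2
          + 10 * deriv (deriv h) (‖x‖ ^ 2))) (‖x‖ ^ 2) := by
      refine (((((D2 (‖x‖ ^ 2)).const_mul 2).mul (hasDerivAt_id _)).add
        ((D1 (‖x‖ ^ 2)).const_mul 8)).const_mul 2).congr_deriv ?_
      simp only [id]
      ring
    rw [hg, aux_lap g (fun t => 2 * (2 * deriv (deriv h) t * t + 8 * deriv h t))
      Dg x _ Dg2]
    rcases eq_or_ne x 0 with rfl | hx
    · simp [hd0]
    · have ht : 0 < ‖x‖ ^ 2 := by positivity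
      rw [le_div_iff₀ ht]
      obtain ⟨k1, k2, k3⟩ := hb _ ht
      rw [abs_le] at k1 k2 k3
      nlinarith

end
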